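/- Let G be a finite r-regular graph with girth g, equipped with a random label assignment with probabilities (p₀,p), and let i ≥ 1 with 2i < g−3 and 2(i+2) < g−2. Then for any vertex u: P(u ∈ B_i | u ∈ B_{i−1}) = (1−p)·(1 − r·p·t_{i−1}/((r−1)·b_{i−1}))^{r−1}. -/

import Mathlib

open MeasureTheory ProbabilityTheory Filter Set

namespace InducedForest

variable {V : Type*}

/-- Label `i` is *relevant* for vertex `v` (w.r.t. the label assignment `S`):
either `i = 0` and `0 ∈ S v`, or `i ∈ S v`, no `j < i` is relevant for `v`, and
there is a unique neighbour of `v` having a relevant label strictly smaller than `i`. -/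
def Relevant (G : SimpleGraph V) (S : V → Set ℕ) (i : ℕ) : V → Prop :=
  Nat.strongRecOn i (fun i ih v =>
    (i = 0 ∧ 0 ∈ S v) ∨
    (i ∈ S v ∧ (∀ j, (h : j < i) → ¬ ih j h v) ∧
      (∃! u, G.Adj v u ∧ ∃ j, ∃ h : j < i, ih j h u)))

/-- `v` has some relevant label `≤ l`, i.e. `v ∈ R_{≤ l}`. -/
def RelevantLe (G : SimpleGraph V) (S : V → Set ℕ) (l : ℕ) (v : V) : Prop :=
  ∃ i ≤ l, Relevant G S i v

inductive Colour | white | blue | orange | purple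
deriving DecidableEq

open Classical in
/-- The colour of `u` at time `l`. -/
noncomputable def colourAt (G : SimpleGraph V) (S : V → Set ℕ) (l : ℕ) (u : V) : Colour :=
  if RelevantLe G S l u then Colour.purple
  else if ∀ v, G.Adj u v → ¬ RelevantLe G S l v then Colour.white
  else if ∃! v, G.Adj u v ∧ RelevantLe G S l v then Colour.blue
  else Colour.orange

/-- The set `W_l` of white vertices at time `l`. -/
def White (G : SimpleGraph V) (S : V → Set ℕ) (l : ℕ) : Set V :=
  {u | ¬ RelevantLe G S l u ∧ ∀ v, G.Adj u v → ¬ RelevantLe G S l v}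

/-- The set `B_l` of blue vertices at time `l`. -/
def Blue (G : SimpleGraph V) (S : V → Set ℕ) (l : ℕ) : Set V :=
  {u | ¬ RelevantLe G S l u ∧ ∃! v, G.Adj u v ∧ RelevantLe G S l v}
/-- The label assignment determined by a sample point `ω`. -/
def labels (ω : V → ℕ → Bool) : V → Set ℕ := fun v => {i | ω v i = true}

/-- `μ` is the random label assignment with probabilities `(p₀, p)`: the events
`i ∈ S(v)` are mutually independent, and each has probability `p₀` if `i = 0`
and `p` if `i ≥ 1`. -/
def IsLabelMeasure (μ : Measure (V → ℕ → Bool)) (p₀ p : ℝ) : Prop :=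
  IsProbabilityMeasure μ ∧
  iIndepSet (fun q : V × ℕ => {ω : V → ℕ → Bool | ω q.1 q.2 = true}) μ ∧
  ∀ (v : V) (i : ℕ), μ {ω | ω v i = true} = ENNReal.ofReal (if i = 0 then p₀ else p)

/-- Event that `u` is white at time `l`. -/
def WEv (G : SimpleGraph V) (l : ℕ) (u : V) : Set (V → ℕ → Bool) :=
  {ω | u ∈ White G (labels ω) l}

/-- Event that `u` is blue at time `l`. -/
def BEv (G : SimpleGraph V) (l : ℕ) (u : V) : Set (V → ℕ → Bool) :=
  {ω | u ∈ Blue G (labels ω) l}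

/-- Event that `u` has relevant label `i`, i.e. `u ∈ R_i`. -/
def REv (G : SimpleGraph V) (i : ℕ) (u : V) : Set (V → ℕ → Bool) :=
  {ω | Relevant G (labels ω) i u}

/-- Event that `u` has a relevant label `≤ l`, i.e. `u ∈ R_{≤ l}`. -/
def RLeEv (G : SimpleGraph V) (l : ℕ) (u : V) : Set (V → ℕ → Bool) :=
  {ω | RelevantLe G (labels ω) l u}

/-- `G` is `r`-regular. -/
def IsRegular (G : SimpleGraph V) (r : ℕ) : Prop :=
  ∀ v : V, (G.neighborSet v).ncard = r

/-! ### Directed (cavity) relevance -/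

lemma relevant_iff (G : SimpleGraph V) (S : V → Set ℕ) (i : ℕ) (v : V) :
    Relevant G S i v ↔ (i = 0 ∧ 0 ∈ S v) ∨
      (i ∈ S v ∧ (∀ j < i, ¬ Relevant G S j v) ∧
        (∃! u, G.Adj v u ∧ ∃ j < i, Relevant G S j u)) := by
  rw [Relevant, Nat.strongRecOn_eq]
  simp only [Relevant, exists_prop]

/-- One step of the recursion: relevance of labels at a vertex with label set `s`
and children (indexed by `ι`) whose relevant labels are given by `m`. -/
def stepRel {ι : Type*} (s : ℕ → Prop) (m : ι → ℕ → Prop) (i : ℕ) : Prop :=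
  Nat.strongRecOn i (fun i ih =>
    (i = 0 ∧ s 0) ∨ (s i ∧ (∀ j, (h : j < i) → ¬ ih j h) ∧ (∃! x, ∃ j < i, m x j)))

lemma stepRel_iff {ι : Type*} (s : ℕ → Prop) (m : ι → ℕ → Prop) (i : ℕ) :
    stepRel s m i ↔ (i = 0 ∧ s 0) ∨
      (s i ∧ (∀ j < i, ¬ stepRel s m j) ∧ (∃! x, ∃ j < i, m x j)) := by
  rw [stepRel, Nat.strongRecOn_eq]
  simp only [stepRel]

/-- Relevance of label `i` for `v` when its neighbour `u` is ignored. -/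
def DRel (G : SimpleGraph V) (S : V → Set ℕ) (i : ℕ) : V → V → Prop :=
  Nat.strongRecOn i (fun i ih u v =>
    (i = 0 ∧ 0 ∈ S v) ∨
    (i ∈ S v ∧ (∀ j, (h : j < i) → ¬ ih j h u v) ∧
      (∃! w, (G.Adj v w ∧ w ≠ u) ∧ ∃ j, ∃ h : j < i, ih j h v w)))

lemma dRel_iff (G : SimpleGraph V) (S : V → Set ℕ) (i : ℕ) (u v : V) :
    DRel G S i u v ↔ (i = 0 ∧ 0 ∈ S v) ∨
      (i ∈ S v ∧ (∀ j < i, ¬ DRel G S j u v) ∧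
        (∃! w, (G.Adj v w ∧ w ≠ u) ∧ ∃ j < i, DRel G S j v w)) := by
  rw [DRel, Nat.strongRecOn_eq]
  simp only [DRel, exists_prop]

lemma dRel_unique {G : SimpleGraph V} {S : V → Set ℕ} {i j : ℕ} {u v : V}
    (hi : DRel G S i u v) (hj : DRel G S j u v) : i = j := by
  have key : ∀ {i j : ℕ}, DRel G S i u v → DRel G S j u v → ¬ i < j := by
    intro i j hi hj hij
    rw [dRel_iff] at hj
    rcases hj with ⟨rfl, _⟩ | ⟨_, h, _⟩
    · omega
    · exact h i hij hi
  have := key hi hj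
  have := key hj hi
  omega

lemma relevant_iff_dRel (G : SimpleGraph V) (S : V → Set ℕ) (k : ℕ) :
    ∀ u v : V, G.Adj u v → (∀ j < k, ¬ Relevant G S j u) →
      (Relevant G S k v ↔ DRel G S k u v) := by
  induction k using Nat.strong_induction_on with
  | _ k ih =>
    intro u v huv hu
    rw [relevant_iff, dRel_iff]
    refine or_congr Iff.rfl (and_congr_right fun _ => ?_)
    have h1 : ∀ j < k, (Relevant G S j v ↔ DRel G S j u v) := fun j hj =>
      ih j hj u v huv (fun j' hj' => hu j' (by omega))
    have h2 : (∀ j < k, ¬ Relevant G S j v) ↔ (∀ j < k, ¬ DRel G S j u v) := by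
      refine forall₂_congr fun j hj => ?_
      rw [h1 j hj]
    rw [h2]
    refine and_congr_right fun hv => ?_
    rw [← h2] at hv
    refine existsUnique_congr fun w => ?_
    constructor
    · rintro ⟨hw, j, hj, hr⟩
      refine ⟨⟨hw, ?_⟩, j, hj, (ih j hj v w hw (fun j' hj' => hv j' (by omega))).1 hr⟩
      rintro rfl
      exact hu j hj hr
    · rintro ⟨⟨hw, _⟩, j, hj, hr⟩
      exact ⟨hw, j, hj, (ih j hj v w hw (fun j' hj' => hv j' (by omega))).2 hr⟩

/-- `x` is the only neighbour of `u` with a (cavity) relevant label `≤ m`, this label is `k`,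
and `u` has not become relevant. -/
def CProp (G : SimpleGraph V) (S : V → Set ℕ) (m : ℕ) (u x : V) (k : ℕ) : Prop :=
  DRel G S k u x ∧ (0 ∉ S u ∧ ∀ j, k < j → j ≤ m → j ∉ S u) ∧
    ∀ v, G.Adj u v → v ≠ x → ∀ k' ≤ m, ¬ DRel G S k' u v

lemma blue_iff (G : SimpleGraph V) (S : V → Set ℕ) (n : ℕ) (u : V) :
    u ∈ Blue G S n ↔ ∃ x, G.Adj u x ∧ ∃ k ≤ n, CProp G S n u x k := by
  constructor
  · rintro ⟨hu, x, ⟨hx, k, hk, hr⟩, hun⟩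
    have hu' : ∀ j ≤ n, ¬ Relevant G S j u := fun j hj h => hu ⟨j, hj, h⟩
    have hD : ∀ j ≤ n, ∀ v, G.Adj u v → (Relevant G S j v ↔ DRel G S j u v) :=
      fun j hj v hv => relevant_iff_dRel G S j u v hv (fun j' hj' => hu' j' (by omega))
    refine ⟨x, hx, k, hk, (hD k hk x hx).1 hr, ⟨fun h0 => ?_, fun j hkj hj hS => ?_⟩, ?_⟩
    · apply hu' 0 (Nat.zero_le _)
      rw [relevant_iff]
      exact Or.inl ⟨rfl, h0⟩
    · apply hu' j hj
      rw [relevant_iff]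
      refine Or.inr ⟨hS, fun j' hj' => hu' j' (by omega), x, ⟨hx, k, hkj, hr⟩, ?_⟩
      rintro y ⟨hy, j', hj', hr'⟩
      exact hun y ⟨hy, j', by omega, hr'⟩
    · intro v hv hvx k' hk' hd
      exact hvx (hun v ⟨hv, k', hk', (hD k' hk' v hv).2 hd⟩)
  · rintro ⟨x, hx, k, hk, hd, ⟨h0, hS⟩, hoth⟩
    have hu' : ∀ j, j ≤ n → ¬ Relevant G S j u := by
      intro j
      induction j using Nat.strong_induction_on with
      | _ j ih =>
        intro hj hr
        rw [relevant_iff] at hr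
        rcases hr with ⟨_, h⟩ | ⟨hjS, _, y, ⟨hy, k', hk', hr'⟩, _⟩
        · exact h0 h
        · have hjk : j ≤ k := by
            by_contra hlt
            exact hS j (by omega) hj hjS
          have hd' := (relevant_iff_dRel G S k' u y hy
            (fun j' hj' => ih j' (by omega) (by omega))).1 hr'
          by_cases hyx : y = x
          · subst hyx
            have := dRel_unique hd hd'
            omega
          · exact hoth y hy hyx k' (by omega) hd'
    have hD : ∀ j ≤ n, ∀ v, G.Adj u v → (Relevant G S j v ↔ DRel G S j u v) :=
      fun j hj v hv => relevant_iff_dRel G S j u v hv (fun j' hj' => hu' j' (by omega))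
    refine ⟨fun ⟨j, hj, h⟩ => hu' j hj h, x, ⟨hx, k, hk, (hD k hk x hx).2 hd⟩, ?_⟩
    rintro y ⟨hy, k', hk', hr'⟩
    by_contra hyx
    exact hoth y hy hyx k' hk' ((hD k' hk' y hy).1 hr')

lemma blue_blue_iff (G : SimpleGraph V) (S : V → Set ℕ) (n : ℕ) (u : V) :
    (u ∈ Blue G S n ∧ u ∈ Blue G S (n + 1)) ↔
      ∃ x, G.Adj u x ∧ ∃ k ≤ n, CProp G S (n + 1) u x k := by
  rw [blue_iff, blue_iff]
  constructor
  · rintro ⟨⟨x, hx, k, hk, hd, -, -⟩, x', hx', k', hk', hd', hS', ho'⟩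
    refine ⟨x', hx', k', ?_, hd', hS', ho'⟩
    by_cases hxx : x = x'
    · subst hxx
      have := dRel_unique hd hd'
      omega
    · exact absurd hd (ho' x hx hxx k (by omega))
  · rintro ⟨x, hx, k, hk, hd, ⟨h0, hS⟩, ho⟩
    exact ⟨⟨x, hx, k, hk, hd, ⟨h0, fun j h1 h2 => hS j h1 (by omega)⟩,
      fun v hv hvx k' hk' => ho v hv hvx k' (by omega)⟩,
      x, hx, k, by omega, hd, ⟨h0, hS⟩, ho⟩

lemma blue_pair_iff (G : SimpleGraph V) (S : V → Set ℕ) (n : ℕ) (a c : V) (hac : G.Adj a c) :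
    ((a ∈ Blue G S n ∧ c ∈ Blue G S n) ∧ (n + 1) ∈ S c) ↔
      ∃ x, (G.Adj a x ∧ x ≠ c) ∧ ∃ k ≤ n, DRel G S k a x ∧
        (0 ∉ S a ∧ ∀ j, k < j → j ≤ n → j ∉ S a) ∧ DRel G S (n + 1) a c ∧
        ∀ v, G.Adj a v → v ≠ x → v ≠ c → ∀ k' ≤ n, ¬ DRel G S k' a v := by
  have h1 : (c ∈ Blue G S n ∧ (n + 1) ∈ S c) ↔ Relevant G S (n + 1) c := by
    rw [relevant_iff]
    simp only [Blue, RelevantLe, Set.mem_ofPred_eq, Nat.lt_succ_iff, not_exists, not_and]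
    simp
    tauto
  have h2 : a ∈ Blue G S n → (Relevant G S (n + 1) c ↔ DRel G S (n + 1) a c) := by
    intro ha
    exact relevant_iff_dRel G S (n + 1) a c hac (fun j hj h => ha.1 ⟨j, by omega, h⟩)
  have h3 : ((a ∈ Blue G S n ∧ c ∈ Blue G S n) ∧ (n + 1) ∈ S c) ↔
      (a ∈ Blue G S n ∧ DRel G S (n + 1) a c) := by
    constructor
    · rintro ⟨⟨ha, hc⟩, hS⟩
      exact ⟨ha, (h2 ha).1 (h1.1 ⟨hc, hS⟩)⟩
    · rintro ⟨ha, hd⟩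
      have := h1.2 ((h2 ha).2 hd)
      exact ⟨⟨ha, this.1⟩, this.2⟩
  rw [h3, blue_iff]
  constructor
  · rintro ⟨⟨x, hx, k, hk, hd, hS, ho⟩, hc⟩
    refine ⟨x, ⟨hx, ?_⟩, k, hk, hd, hS, hc, fun v hv hvx _ => ho v hv hvx⟩
    rintro rfl
    have := dRel_unique hd hc
    omega
  · rintro ⟨x, ⟨hx, hxc⟩, k, hk, hd, hS, hc, ho⟩
    refine ⟨⟨x, hx, k, hk, hd, hS, fun v hv hvx k' hk' h => ?_⟩, hc⟩
    by_cases hvc : v = c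
    · subst hvc
      have := dRel_unique h hc
      omega
    · exact ho v hv hvx hvc k' hk' h

/-! ### Supports and girth -/

/-- Vertices reachable from `u` by a path of length at most `l` that starts with `u, v`. -/
def Supp (G : SimpleGraph V) (l : ℕ) (u v : V) : Set V :=
  {z | ∃ q : G.Walk v z, q.IsPath ∧ u ∉ q.support ∧ q.length < l}

lemma supp_mono {G : SimpleGraph V} {l l' : ℕ} (h : l ≤ l') (u v : V) :
    Supp G l u v ⊆ Supp G l' u v := by
  rintro z ⟨q, h1, h2, h3⟩
  exact ⟨q, h1, h2, by omega⟩

lemma not_mem_supp {G : SimpleGraph V} {l : ℕ} {u v : V} : u ∉ Supp G l u v := by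
  rintro ⟨q, _, h, _⟩
  exact h q.end_mem_support

lemma self_mem_supp {G : SimpleGraph V} {l : ℕ} {u v : V} (h : G.Adj u v) :
    v ∈ Supp G (l + 1) u v :=
  ⟨.nil, by simp, by simpa using h.ne, by simp⟩

lemma supp_step {G : SimpleGraph V} {g : ℕ} (hg : (g : ℕ∞) ≤ G.egirth) {l : ℕ} (hl : l + 1 < g)
    {u v w : V} (huv : G.Adj u v) (hvw : G.Adj v w) (hwu : w ≠ u) :
    Supp G l v w ⊆ Supp G (l + 1) u v := by
  classical
  rintro z ⟨q, hq, hv, hlen⟩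
  refine ⟨.cons hvw q, by simp [hq, hv], ?_, by simpa using hlen⟩
  simp only [SimpleGraph.Walk.support_cons, List.mem_cons, not_or]
  refine ⟨huv.ne, fun hu => ?_⟩
  have hv' : v ∉ (q.takeUntil u hu).support := fun h =>
    hv (SimpleGraph.Walk.support_takeUntil_subset_support _ hu h)
  have hc : (SimpleGraph.Walk.cons huv (.cons hvw (q.takeUntil u hu))).IsCycle := by
    rw [SimpleGraph.Walk.cons_isCycle_iff]
    refine ⟨by simp [hq.takeUntil hu, hv'], ?_⟩
    simp only [SimpleGraph.Walk.edges_cons, List.mem_cons, not_or]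
    refine ⟨?_, fun h => hv' (SimpleGraph.Walk.snd_mem_support_of_mem_edges _ h)⟩
    simp [huv.ne, hwu.symm]
  have h1 := hg.trans (SimpleGraph.egirth_le_length hc)
  have h2 := SimpleGraph.Walk.length_takeUntil_le_length _ hu
  simp only [SimpleGraph.Walk.length_cons, Nat.cast_le] at h1
  omega

lemma supp_disjoint {G : SimpleGraph V} {g : ℕ} (hg : (g : ℕ∞) ≤ G.egirth) {l : ℕ}
    (hl : 2 * l < g) {u v v' z : V} (huv : G.Adj u v) (huv' : G.Adj u v')
    (hz : z ∈ Supp G l u v) (hz' : z ∈ Supp G l u v') : v = v' := by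
  obtain ⟨q, hq, hu, hlen⟩ := hz
  obtain ⟨q', hq', hu', hlen'⟩ := hz'
  by_contra hne
  have hp : (SimpleGraph.Walk.cons huv q).IsPath := by simp [hq, hu]
  have hp' : (SimpleGraph.Walk.cons huv' q').IsPath := by simp [hq', hu']
  have hneq : SimpleGraph.Walk.cons huv q ≠ SimpleGraph.Walk.cons huv' q' := by
    intro h
    have := congrArg SimpleGraph.Walk.snd h
    simp at this
    exact hne this
  obtain ⟨w, -, -, c, hc, hcl⟩ := hp.exists_isCycle_length_le_add_of_ne hp' hneq
  have h1 := hg.trans (SimpleGraph.egirth_le_length hc)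
  simp only [SimpleGraph.Walk.length_cons, Nat.cast_le] at h1 hcl
  omega

/-- `DRel` of labels `≤ j` only depends on the labels `≤ j` of the support. -/
lemma dRel_congr {G : SimpleGraph V} {g : ℕ} (hg : (g : ℕ∞) ≤ G.egirth) (j : ℕ) (hj : j + 1 < g) :
    ∀ (S S' : V → Set ℕ) (u v : V), G.Adj u v →
      (∀ z ∈ Supp G (j + 1) u v, ∀ k ≤ j, (k ∈ S z ↔ k ∈ S' z)) →
      (DRel G S j u v ↔ DRel G S' j u v) := by
  induction j using Nat.strong_induction_on with
  | _ j ih =>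
    intro S S' u v huv h
    rw [dRel_iff, dRel_iff]
    have hv := h v (self_mem_supp huv)
    refine or_congr (and_congr_right fun _ => hv 0 (Nat.zero_le _)) ?_
    rw [hv j le_rfl]
    refine and_congr_right fun _ => and_congr ?_ ?_
    · refine forall₂_congr fun k hk => not_congr ?_
      exact ih k hk (by omega) S S' u v huv
        (fun z hz k' hk' => h z (supp_mono (by omega) _ _ hz) k' (by omega))
    · refine existsUnique_congr fun w => and_congr_right fun hw => ?_
      refine exists_congr fun k => and_congr_right fun hk => ?_
      refine ih k hk (by omega) S S' v w hw.1 (fun z hz k' hk' => h z ?_ k' (by omega))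
      have hz' := supp_mono (show k + 1 ≤ j by omega) _ _ hz
      exact supp_step hg hj huv hw.1 hw.2 hz'

lemma relevant_congr (G : SimpleGraph V) (j : ℕ) :
    ∀ (S S' : V → Set ℕ) (v : V), (∀ z, ∀ k ≤ j, (k ∈ S z ↔ k ∈ S' z)) →
      (Relevant G S j v ↔ Relevant G S' j v) := by
  induction j using Nat.strong_induction_on with
  | _ j ih =>
    intro S S' v h
    rw [relevant_iff, relevant_iff]
    refine or_congr (and_congr_right fun _ => h v 0 (Nat.zero_le _)) ?_
    rw [h v j le_rfl]
    refine and_congr_right fun _ => and_congr ?_ ?_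
    · refine forall₂_congr fun k hk => not_congr ?_
      exact ih k hk S S' v (fun z k' hk' => h z k' (by omega))
    · refine existsUnique_congr fun w => and_congr_right fun hw => ?_
      refine exists_congr fun k => and_congr_right fun hk => ?_
      exact ih k hk S S' w (fun z k' hk' => h z k' (by omega))

lemma blue_congr (G : SimpleGraph V) (n : ℕ) (S S' : V → Set ℕ) (v : V)
    (h : ∀ z, ∀ k ≤ n, (k ∈ S z ↔ k ∈ S' z)) : v ∈ Blue G S n ↔ v ∈ Blue G S' n := by
  have : ∀ v, RelevantLe G S n v ↔ RelevantLe G S' n v := fun v =>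
    exists_congr fun k => and_congr_right fun hk =>
      relevant_congr G k S S' v (fun z k' hk' => h z k' (by omega))
  simp only [Blue, Set.mem_ofPred_eq, this]

/-! ### Independence -/

/-- The event `E` is determined by the coordinates in `S`. -/
def DetBy (S : Finset (V × ℕ)) (E : Set (V → ℕ → Bool)) : Prop :=
  ∀ ω ω' : V → ℕ → Bool, (∀ q ∈ S, ω q.1 q.2 = ω' q.1 q.2) → (ω ∈ E ↔ ω' ∈ E)

lemma coord_indep {μ : Measure (V → ℕ → Bool)} {p₀ p : ℝ} (hμ : IsLabelMeasure μ p₀ p) :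
    iIndepFun (fun (q : V × ℕ) (ω : V → ℕ → Bool) => ω q.1 q.2) μ := by
  rw [iIndepFun_iff_measure_inter_preimage_eq_mul]
  intro S B _
  refine (iIndepSet_iff _ _).1 hμ.2.1 S (f := fun q => (fun ω : V → ℕ → Bool => ω q.1 q.2) ⁻¹' B q)
    (fun q _ => ?_)
  rw [measurableSet_generateFrom_singleton_iff]
  by_cases ht : true ∈ B q <;> by_cases hf : false ∈ B q
  · right; right; right
    ext ω
    cases h : ω q.1 q.2 <;> simp [h, ht, hf]
  · right; left
    ext ω
    cases h : ω q.1 q.2 <;> simp [h, ht, hf]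
  · right; right; left
    ext ω
    cases h : ω q.1 q.2 <;> simp [h, ht, hf]
  · left
    ext ω
    cases h : ω q.1 q.2 <;> simp [h, ht, hf]

open Classical in
/-- Extension of a partial configuration by `false`. -/
noncomputable def extCfg (S : Finset (V × ℕ)) (y : S → Bool) : V → ℕ → Bool :=
  fun v j => if h : (v, j) ∈ S then y ⟨(v, j), h⟩ else false

lemma detBy_eq {S : Finset (V × ℕ)} {E : Set (V → ℕ → Bool)} (h : DetBy S E) :
    E = (fun (ω : V → ℕ → Bool) (q : S) => ω q.1.1 q.1.2) ⁻¹' {y | extCfg S y ∈ E} := by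
  ext ω
  refine h ω _ fun q hq => ?_
  simp [extCfg, hq]

lemma DetBy.measurableSet {S : Finset (V × ℕ)} {E : Set (V → ℕ → Bool)} (h : DetBy S E) :
    MeasurableSet E := by
  rw [detBy_eq h]
  have hm : Measurable (fun (ω : V → ℕ → Bool) (q : S) => ω q.1.1 q.1.2) := by fun_prop
  exact hm (MeasurableSet.of_discrete)

lemma DetBy.mono {S T : Finset (V × ℕ)} {E : Set (V → ℕ → Bool)} (h : DetBy S E) (hST : S ⊆ T) :
    DetBy T E := fun ω ω' hω => h ω ω' fun q hq => hω q (hST hq)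

lemma DetBy.inter_indep {μ : Measure (V → ℕ → Bool)} {p₀ p : ℝ} (hμ : IsLabelMeasure μ p₀ p)
    {S T : Finset (V × ℕ)} {E F : Set (V → ℕ → Bool)} (hE : DetBy S E) (hF : DetBy T F)
    (hST : Disjoint S T) : μ (E ∩ F) = μ E * μ F := by
  have h := (coord_indep hμ).indepFun_finset S T hST (fun q => by fun_prop)
  have h2 := h.measure_inter_preimage_eq_mul {y | extCfg S y ∈ E} {y | extCfg T y ∈ F}
    MeasurableSet.of_discrete MeasurableSet.of_discrete
  have e1 := detBy_eq hE
  have e2 := detBy_eq hF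
  rw [← e1, ← e2] at h2
  exact h2

lemma DetBy.biInter {ι : Type*} [DecidableEq (V × ℕ)] {S : ι → Finset (V × ℕ)}
    {E : ι → Set (V → ℕ → Bool)} (hE : ∀ i, DetBy (S i) (E i)) (I : Finset ι) :
    DetBy (I.biUnion S) (⋂ i ∈ I, E i) := by
  intro ω ω' h
  simp only [Set.mem_iInter]
  refine forall₂_congr fun i hi => hE i ω ω' fun q hq => h q ?_
  exact Finset.mem_biUnion.2 ⟨i, hi, hq⟩

lemma DetBy.biInter_indep {μ : Measure (V → ℕ → Bool)} {p₀ p : ℝ} (hμ : IsLabelMeasure μ p₀ p)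
    {ι : Type*} {S : ι → Finset (V × ℕ)} {E : ι → Set (V → ℕ → Bool)}
    (hE : ∀ i, DetBy (S i) (E i)) (hS : ∀ i j, i ≠ j → Disjoint (S i) (S j)) (I : Finset ι) :
    μ (⋂ i ∈ I, E i) = ∏ i ∈ I, μ (E i) := by
  classical
  have := hμ.1
  induction I using Finset.induction_on with
  | empty => simp
  | insert i I hi ih =>
    rw [Finset.prod_insert hi, ← ih, Finset.set_biInter_insert]
    refine DetBy.inter_indep hμ (hE i) (DetBy.biInter hE I) ?_
    rw [Finset.disjoint_biUnion_right]
    intro j hj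
    exact hS i j (by rintro rfl; exact hi hj)

open Classical in
/-- The labels `< l` of `v`. -/
noncomputable def labTr (l : ℕ) (v : V) (ω : V → ℕ → Bool) : Finset ℕ :=
  (Finset.range l).filter (fun j => j ∈ labels ω v)

open Classical in
/-- The cavity relevant labels `< l` of `v` (ignoring `u`). -/
noncomputable def msg (G : SimpleGraph V) (l : ℕ) (u v : V) (ω : V → ℕ → Bool) : Finset ℕ :=
  (Finset.range l).filter (fun j => DRel G (labels ω) j u v)

lemma mem_labTr {l : ℕ} {v : V} {ω : V → ℕ → Bool} {j : ℕ} :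
    j ∈ labTr l v ω ↔ j < l ∧ j ∈ labels ω v := by simp [labTr]

lemma mem_msg {G : SimpleGraph V} {l : ℕ} {u v : V} {ω : V → ℕ → Bool} {j : ℕ} :
    j ∈ msg G l u v ω ↔ j < l ∧ DRel G (labels ω) j u v := by simp [msg]

/-- The family of label set of `v` and messages from its neighbours. -/
noncomputable def fam (G : SimpleGraph V) (l l' : ℕ) (v : V) :
    Option {w // G.Adj v w} → (V → ℕ → Bool) → Finset ℕ
  | none => labTr l' v
  | some w => msg G l v w

open Classical in
/-- Coordinates determining the members of `fam`. -/
noncomputable def famSupp [Fintype V] (G : SimpleGraph V) (l l' : ℕ) (v : V) :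
    Option {w // G.Adj v w} → Finset (V × ℕ)
  | none => {v} ×ˢ Finset.range l'
  | some w => (Finset.univ.filter (fun z => z ∈ Supp G l v w)) ×ˢ Finset.range l

lemma fam_det [Fintype V] {G : SimpleGraph V} {g : ℕ} (hg : (g : ℕ∞) ≤ G.egirth) {l : ℕ}
    (hl : 2 * l < g) (l' : ℕ) (v : V) (o : Option {w // G.Adj v w}) (A : Set (Finset ℕ)) :
    DetBy (famSupp G l l' v o) (fam G l l' v o ⁻¹' A) := by
  intro ω ω' h
  suffices h' : fam G l l' v o ω = fam G l l' v o ω' by simp [h']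
  cases o with
  | none =>
    ext j
    simp only [fam, mem_labTr]
    refine and_congr_right fun hj => ?_
    have := h (v, j) (by simp [famSupp, hj])
    simp only at this
    simp [labels, this]
  | some w =>
    ext j
    simp only [fam, mem_msg]
    refine and_congr_right fun hj => ?_
    refine dRel_congr hg j (by omega) _ _ _ _ w.2 fun z hz k hk => ?_
    have := h (z, k) (by
      simp only [famSupp, Finset.mem_product, Finset.mem_filter, Finset.mem_univ, true_and,
        Finset.mem_range]
      exact ⟨supp_mono (by omega) _ _ hz, by omega⟩)
    simp only at this
    simp [labels, this]

lemma famSupp_disjoint [Fintype V] {G : SimpleGraph V} {g : ℕ} (hg : (g : ℕ∞) ≤ G.egirth) {l : ℕ}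
    (hl : 2 * l < g) (l' : ℕ) (v : V) (o o' : Option {w // G.Adj v w}) (hne : o ≠ o') :
    Disjoint (famSupp G l l' v o) (famSupp G l l' v o') := by
  rw [Finset.disjoint_left]
  rintro ⟨z, k⟩ h h'
  cases o with
  | none =>
    cases o' with
    | none => exact hne rfl
    | some w =>
      simp only [famSupp, Finset.mem_product, Finset.mem_filter, Finset.mem_univ, true_and,
        Finset.mem_singleton] at h h'
      rw [h.1] at h'
      exact not_mem_supp h'.1
  | some w =>
    cases o' with
    | none =>
      simp only [famSupp, Finset.mem_product, Finset.mem_filter, Finset.mem_univ, true_and,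
        Finset.mem_singleton] at h h'
      rw [h'.1] at h
      exact not_mem_supp h.1
    | some w' =>
      simp only [famSupp, Finset.mem_product, Finset.mem_filter, Finset.mem_univ, true_and] at h h'
      exact hne (congrArg some (Subtype.ext (supp_disjoint hg hl w.2 w'.2 h.1 h'.1)))

lemma fam_measurable [Fintype V] {G : SimpleGraph V} {g : ℕ} (hg : (g : ℕ∞) ≤ G.egirth) {l : ℕ}
    (hl : 2 * l < g) (l' : ℕ) (v : V) (o : Option {w // G.Adj v w}) :
    Measurable (fam G l l' v o) :=
  fun A _ => (fam_det hg hl l' v o A).measurableSet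

lemma fam_indep [Fintype V] {G : SimpleGraph V} {g : ℕ} (hg : (g : ℕ∞) ≤ G.egirth) {l : ℕ}
    (hl : 2 * l < g) (l' : ℕ) (v : V) {μ : Measure (V → ℕ → Bool)} {p₀ p : ℝ}
    (hμ : IsLabelMeasure μ p₀ p) : iIndepFun (fam G l l' v) μ := by
  rw [iIndepFun_iff_measure_inter_preimage_eq_mul]
  intro I A _
  exact DetBy.biInter_indep hμ (fun o => fam_det hg hl l' v o (A o))
    (famSupp_disjoint hg hl l' v) I

lemma msg_measurable [Fintype V] {G : SimpleGraph V} {g : ℕ} (hg : (g : ℕ∞) ≤ G.egirth) {l : ℕ}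
    (hl : 2 * l < g) {u v : V} (h : G.Adj u v) : Measurable (msg G l u v) :=
  fam_measurable hg hl 0 u (some ⟨v, h⟩)

lemma labTr_measurable (l : ℕ) (v : V) : Measurable (labTr l v) := by
  classical
  intro A _
  have : DetBy ({v} ×ˢ Finset.range l) (labTr l v ⁻¹' A) := by
    intro ω ω' h
    suffices h' : labTr l v ω = labTr l v ω' by simp [h']
    ext j
    simp only [mem_labTr]
    refine and_congr_right fun hj => ?_
    have := h (v, j) (by simp [hj])
    simp only at this
    simp [labels, this]
  exact this.measurableSet

/-! ### Laws -/

lemma law_coord {μ : Measure (V → ℕ → Bool)} {p₀ p : ℝ} (hμ : IsLabelMeasure μ p₀ p)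
    (v v' : V) (j : ℕ) :
    μ.map (fun ω : V → ℕ → Bool => ω v j) = μ.map (fun ω : V → ℕ → Bool => ω v' j) := by
  have := hμ.1
  have hm : ∀ v : V, Measurable (fun ω : V → ℕ → Bool => ω v j) := fun v => by fun_prop
  have ht : ∀ v : V, μ ((fun ω : V → ℕ → Bool => ω v j) ⁻¹' {true})
      = ENNReal.ofReal (if j = 0 then p₀ else p) := fun v => hμ.2.2 v j
  have hf : ∀ v : V, μ ((fun ω : V → ℕ → Bool => ω v j) ⁻¹' {false})
      = 1 - ENNReal.ofReal (if j = 0 then p₀ else p) := fun v => by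
    rw [← ht v, ← prob_compl_eq_one_sub (hm v (MeasurableSet.of_discrete))]
    congr 1
    ext ω
    simp
  refine Measure.ext_of_singleton fun b => ?_
  rw [Measure.map_apply (hm v) .of_discrete, Measure.map_apply (hm v') .of_discrete]
  cases b
  · rw [hf, hf]
  · rw [ht, ht]

lemma law_labTr {μ : Measure (V → ℕ → Bool)} {p₀ p : ℝ} (hμ : IsLabelMeasure μ p₀ p)
    (l : ℕ) (v v' : V) : μ.map (labTr l v) = μ.map (labTr l v') := by
  classical
  have := hμ.1
  have hvec : ∀ v : V, μ.map (fun (ω : V → ℕ → Bool) (j : Fin l) => ω v j)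
      = Measure.pi (fun j : Fin l => μ.map (fun ω : V → ℕ → Bool => ω v j)) := by
    intro v
    refine (iIndepFun_iff_map_fun_eq_pi_map (fun j => ?_)).1 ?_
    · exact Measurable.aemeasurable (by fun_prop)
    · refine (coord_indep hμ).precomp (g := fun j : Fin l => (v, (j : ℕ))) ?_
      intro j j' h
      simpa [Fin.ext_iff] using h
  let ψ : (Fin l → Bool) → Finset ℕ := fun y =>
    (Finset.range l).filter (fun j => ∃ h : j < l, y ⟨j, h⟩ = true)
  have hψ : ∀ v : V, labTr l v = ψ ∘ (fun (ω : V → ℕ → Bool) (j : Fin l) => ω v j) := by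
    intro v
    funext ω
    ext j
    simp only [mem_labTr, ψ, Function.comp, Finset.mem_filter, Finset.mem_range, labels,
      Set.mem_ofPred_eq]
    refine and_congr_right fun hj => ?_
    simp [hj]
  have hm : ∀ v : V, Measurable (fun (ω : V → ℕ → Bool) (j : Fin l) => ω v j) := fun v => by
    fun_prop
  rw [hψ v, hψ v', ← Measure.map_map (.of_discrete) (hm v), ← Measure.map_map (.of_discrete) (hm v'),
    hvec, hvec]
  congr 2
  funext j
  exact law_coord hμ v v' j

lemma dRel_iff_step {G : SimpleGraph V} {l : ℕ} {u v : V} {s : ℕ}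
    (e : Fin s ≃ {w // G.Adj v w ∧ w ≠ u}) (ω : V → ℕ → Bool) (j : ℕ) (hj : j < l + 1) :
    DRel G (labels ω) j u v ↔
      stepRel (fun k => k ∈ labTr (l + 1) v ω) (fun x k => k ∈ msg G l v (e x) ω) j := by
  induction j using Nat.strong_induction_on with
  | _ j ih =>
    rw [dRel_iff, stepRel_iff]
    simp only [mem_labTr, mem_msg]
    refine or_congr (and_congr_right fun _ => by simp) (and_congr (by simp [hj]) (and_congr ?_ ?_))
    · refine forall₂_congr fun k hk => not_congr ?_
      simpa only [mem_labTr, mem_msg] using ih k hk (by omega)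
    · constructor
      · rintro ⟨w, ⟨hw, k, hk, hd⟩, huniq⟩
        refine ⟨e.symm ⟨w, hw⟩, ⟨k, hk, by omega, by simpa using hd⟩, ?_⟩
        rintro x ⟨k', hk', _, hd'⟩
        rw [Equiv.eq_symm_apply]
        exact Subtype.ext (huniq _ ⟨(e x).2, k', hk', hd'⟩)
      · rintro ⟨x, ⟨k, hk, _, hd⟩, huniq⟩
        refine ⟨e x, ⟨(e x).2, k, hk, hd⟩, ?_⟩
        rintro w ⟨hw, k', hk', hd'⟩
        have := huniq (e.symm ⟨w, hw⟩) ⟨k', hk', by omega, by simpa using hd'⟩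
        rw [← this]
        simp

open Classical in
/-- The symmetric update function for messages. -/
noncomputable def upd (l s : ℕ) (y : Option (Fin s) → Finset ℕ) : Finset ℕ :=
  (Finset.range (l + 1)).filter
    (stepRel (fun k => k ∈ y none) (fun (x : Fin s) k => k ∈ y (some x)))

lemma exists_children [Fintype V] {G : SimpleGraph V} {r : ℕ} (hreg : IsRegular G r) {u v : V}
    (h : G.Adj u v) : Nonempty (Fin (r - 1) ≃ {w // G.Adj v w ∧ w ≠ u}) := by
  have h1 : Nat.card {w // G.Adj v w ∧ w ≠ u} = r - 1 := by
    have h2 : {w | G.Adj v w ∧ w ≠ u} = G.neighborSet v \ {u} := by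
      ext w
      simp
    have h3 : (G.neighborSet v \ {u}).ncard = r - 1 := by
      rw [Set.ncard_sdiff_singleton_of_mem (by simpa using h.symm), hreg v]
    rw [← h2] at h3
    exact h3
  exact ⟨(Finite.equivFinOfCardEq h1).symm⟩

lemma law_msg [Fintype V] {G : SimpleGraph V} {g r : ℕ} (hreg : IsRegular G r)
    (hg : (g : ℕ∞) ≤ G.egirth) {μ : Measure (V → ℕ → Bool)} {p₀ p : ℝ}
    (hμ : IsLabelMeasure μ p₀ p) (l : ℕ) (hl : 2 * l < g) :
    ∀ u v u' v' : V, G.Adj u v → G.Adj u' v' → μ.map (msg G l u v) = μ.map (msg G l u' v') := by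
  have := hμ.1
  induction l with
  | zero =>
    intro u v u' v' _ _
    have : ∀ u v : V, msg G 0 u v = fun _ => ∅ := by
      intro u v
      funext ω
      simp [msg]
    rw [this, this]
  | succ l ih =>
    intro u v u' v' h h'
    specialize ih (by omega)
    let lawL := μ.map (labTr (l + 1) v)
    let lawM := μ.map (msg G l v u)
    have key : ∀ u₁ v₁ : V, G.Adj u₁ v₁ → μ.map (msg G (l + 1) u₁ v₁) =
        (Measure.pi (fun o : Option (Fin (r - 1)) => o.elim lawL (fun _ => lawM))).map
          (upd l (r - 1)) := by
      intro u₁ v₁ h₁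
      obtain ⟨e⟩ := exists_children hreg h₁
      let ie : Option (Fin (r - 1)) → Option {w // G.Adj v₁ w} :=
        Option.map (fun x => ⟨(e x).1, (e x).2.1⟩)
      have hie : Function.Injective ie := by
        refine Option.map_injective fun x y hxy => e.injective (Subtype.ext ?_)
        simpa using hxy
      have hind := (fam_indep hg (show 2 * l < g by omega) (l + 1) v₁ hμ).precomp hie
      have hmeas : ∀ o, Measurable (fam G l (l + 1) v₁ (ie o)) := fun o =>
        fam_measurable hg (by omega) (l + 1) v₁ (ie o)
      have hlaw := (iIndepFun_iff_map_fun_eq_pi_map (fun o => (hmeas o).aemeasurable)).1 hind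
      have hlaw2 : (fun o => μ.map (fam G l (l + 1) v₁ (ie o)))
          = (fun o : Option (Fin (r - 1)) => o.elim lawL (fun _ => lawM)) := by
        funext o
        cases o with
        | none => exact law_labTr hμ (l + 1) v₁ v
        | some x => exact ih _ _ _ _ (e x).2.1 h.symm
      rw [hlaw2] at hlaw
      rw [← hlaw, Measure.map_map .of_discrete (measurable_pi_lambda _ hmeas)]
      congr 1
      funext ω
      ext j
      simp only [mem_msg, upd, Function.comp, Finset.mem_filter, Finset.mem_range]
      refine and_congr_right fun hj => ?_
      exact dRel_iff_step e ω j hj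
    rw [key u v h, key u' v' h']

lemma labTr_event {μ : Measure (V → ℕ → Bool)} {p₀ p : ℝ} (hμ : IsLabelMeasure μ p₀ p)
    (l : ℕ) (v v' : V) (A : Set (Finset ℕ)) :
    μ.real (labTr l v ⁻¹' A) = μ.real (labTr l v' ⁻¹' A) := by
  have h := congrArg (fun ν : Measure (Finset ℕ) => ν A) (law_labTr hμ l v v')
  simp only [Measure.map_apply (labTr_measurable l _) (MeasurableSet.of_discrete (s := A))] at h
  simp [measureReal_def, h]

lemma msg_event [Fintype V] {G : SimpleGraph V} {g r : ℕ} (hreg : IsRegular G r)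
    (hg : (g : ℕ∞) ≤ G.egirth) {μ : Measure (V → ℕ → Bool)} {p₀ p : ℝ}
    (hμ : IsLabelMeasure μ p₀ p) (l : ℕ) (hl : 2 * l < g) {u v u' v' : V} (h : G.Adj u v)
    (h' : G.Adj u' v') (A : Set (Finset ℕ)) :
    μ.real (msg G l u v ⁻¹' A) = μ.real (msg G l u' v' ⁻¹' A) := by
  have h2 := congrArg (fun ν : Measure (Finset ℕ) => ν A) (law_msg hreg hg hμ l hl u v u' v' h h')
  simp only [Measure.map_apply (msg_measurable hg hl h) (MeasurableSet.of_discrete (s := A)),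
    Measure.map_apply (msg_measurable hg hl h') (MeasurableSet.of_discrete (s := A))] at h2
  simp [measureReal_def, h2]

/-! ### Computing the probabilities -/

/-- Label sets of a vertex compatible with staying irrelevant. -/
def goodL (k m : ℕ) : Set (Finset ℕ) := {s | 0 ∉ s ∧ ∀ j, k < j → j ≤ m → j ∉ s}

/-- Messages without label `≤ m`. -/
def noneM (m : ℕ) : Set (Finset ℕ) := {s | ∀ k ≤ m, k ∉ s}

/-- Messages with label `k`. -/
def hasM (k : ℕ) : Set (Finset ℕ) := {s | k ∈ s}

lemma fam_prod [Fintype V] {G : SimpleGraph V} {g : ℕ} (hg : (g : ℕ∞) ≤ G.egirth) {l : ℕ}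
    (hl : 2 * l < g) (l' : ℕ) (v : V) {μ : Measure (V → ℕ → Bool)} {p₀ p : ℝ}
    (hμ : IsLabelMeasure μ p₀ p) [Fintype {w // G.Adj v w}] (A : Set (Finset ℕ))
    (Q : {w // G.Adj v w} → Set (Finset ℕ)) :
    μ.real {ω | labTr l' v ω ∈ A ∧ ∀ w : {w // G.Adj v w}, msg G l v w ω ∈ Q w} =
      μ.real (labTr l' v ⁻¹' A) * ∏ w : {w // G.Adj v w}, μ.real (msg G l v w ⁻¹' Q w) := by
  have h := (fam_indep hg hl l' v hμ).measure_inter_preimage_eq_mul Finset.univ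
    (sets := fun o => o.elim A Q) (fun _ _ => MeasurableSet.of_discrete)
  rw [Fintype.prod_option] at h
  have h2 : {ω | labTr l' v ω ∈ A ∧ ∀ w : {w // G.Adj v w}, msg G l v w ω ∈ Q w}
      = ⋂ i ∈ (Finset.univ : Finset (Option {w // G.Adj v w})),
        fam G l l' v i ⁻¹' (Option.elim i A Q) := by
    ext ω
    simp [Option.forall, fam]
  rw [measureReal_def, h2, h, ENNReal.toReal_mul, ENNReal.toReal_prod]
  rfl

lemma prob_false {μ : Measure (V → ℕ → Bool)} {p₀ p : ℝ} (hμ : IsLabelMeasure μ p₀ p)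
    (hp : p ∈ Ioo (0 : ℝ) 1) (v : V) (j : ℕ) :
    μ.real {ω | (j + 1) ∉ labels ω v} = 1 - p := by
  have := hμ.1
  have hm : MeasurableSet {ω : V → ℕ → Bool | ω v (j + 1) = true} := by
    have : Measurable (fun ω : V → ℕ → Bool => ω v (j + 1)) := by fun_prop
    exact this (MeasurableSet.of_discrete (s := {true}))
  have h := probReal_compl_eq_one_sub (μ := μ) hm
  have h2 : μ.real {ω : V → ℕ → Bool | ω v (j + 1) = true} = p := by
    rw [measureReal_def, hμ.2.2 v (j + 1)]
    simp [hp.1.le]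
  rw [h2] at h
  exact h

lemma prob_true {μ : Measure (V → ℕ → Bool)} {p₀ p : ℝ} (hμ : IsLabelMeasure μ p₀ p)
    (hp : p ∈ Ioo (0 : ℝ) 1) (v : V) (j : ℕ) :
    μ.real {ω | (j + 1) ∈ labels ω v} = p := by
  have h : μ {ω : V → ℕ → Bool | (j + 1) ∈ labels ω v} = _ := hμ.2.2 v (j + 1)
  rw [measureReal_def, h]
  simp [hp.1.le]

lemma prob_zero {μ : Measure (V → ℕ → Bool)} {p₀ p : ℝ} (hμ : IsLabelMeasure μ p₀ p)
    (hp₀ : p₀ ∈ Ioo (0 : ℝ) 1) (v : V) :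
    μ.real {ω | 0 ∈ labels ω v} = p₀ := by
  have h : μ {ω : V → ℕ → Bool | 0 ∈ labels ω v} = _ := hμ.2.2 v 0
  rw [measureReal_def, h]
  simp [hp₀.1.le]

/-- The event `goodL` in terms of the labels. -/
def goodEv (k m : ℕ) (v : V) : Set (V → ℕ → Bool) :=
  {ω | 0 ∉ labels ω v ∧ ∀ j, k < j → j ≤ m → j ∉ labels ω v}

lemma goodEv_eq {l k m : ℕ} (hm : m < l) (v : V) :
    labTr l v ⁻¹' goodL k m = goodEv k m v := by
  ext ω
  simp only [goodL, goodEv, Set.mem_preimage, Set.mem_ofPred_eq, mem_labTr]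
  constructor
  · rintro ⟨h0, h⟩
    exact ⟨fun h' => h0 ⟨by omega, h'⟩, fun j h1 h2 h3 => h j h1 h2 ⟨by omega, h3⟩⟩
  · rintro ⟨h0, h⟩
    exact ⟨fun h' => h0 h'.2, fun j h1 h2 h3 => h j h1 h2 h3.2⟩

lemma goodEv_succ {μ : Measure (V → ℕ → Bool)} {p₀ p : ℝ} (hμ : IsLabelMeasure μ p₀ p)
    (hp : p ∈ Ioo (0 : ℝ) 1) (v : V) {k m : ℕ} (hk : k ≤ m) :
    μ.real (goodEv k (m + 1) v) = (1 - p) * μ.real (goodEv k m v) := by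
  classical
  have h1 : goodEv k (m + 1) v = goodEv k m v ∩ {ω | (m + 1) ∉ labels ω v} := by
    ext ω
    simp only [goodEv, Set.mem_inter_iff, Set.mem_ofPred_eq]
    constructor
    · rintro ⟨h0, h⟩
      exact ⟨⟨h0, fun j h1 h2 => h j h1 (by omega)⟩, h _ (by omega) le_rfl⟩
    · rintro ⟨⟨h0, h⟩, h'⟩
      refine ⟨h0, fun j h1 h2 => ?_⟩
      rcases Nat.lt_or_ge m j with h3 | h3
      · obtain rfl : j = m + 1 := by omega
        exact h'
      · exact h j h1 h3
  have hd1 : DetBy ({v} ×ˢ Finset.range (m + 1)) (goodEv k m v) := by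
    intro ω ω' h
    have h' : ∀ j ≤ m, (j ∈ labels ω v ↔ j ∈ labels ω' v) := fun j hj => by
      have := h (v, j) (by simp; omega)
      simp only at this
      simp [labels, this]
    simp only [goodEv, Set.mem_ofPred_eq]
    refine and_congr (not_congr (h' 0 (Nat.zero_le _))) ?_
    refine forall₃_congr fun j _ hj => not_congr (h' j hj)
  have hd2 : DetBy {(v, m + 1)} {ω : V → ℕ → Bool | (m + 1) ∉ labels ω v} := by
    intro ω ω' h
    have := h (v, m + 1) (by simp)
    simp only at this
    simp [labels, this]
  have h3 := DetBy.inter_indep hμ hd1 hd2 (by simp)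
  rw [h1, measureReal_def, h3, ENNReal.toReal_mul, mul_comm, ← measureReal_def, ← measureReal_def,
    prob_false hμ hp]

lemma goodEv_pos {μ : Measure (V → ℕ → Bool)} {p₀ p : ℝ} (hμ : IsLabelMeasure μ p₀ p)
    (hp₀ : p₀ ∈ Ioo (0 : ℝ) 1) (hp : p ∈ Ioo (0 : ℝ) 1) (v : V) (m : ℕ) :
    0 < μ.real (goodEv 0 m v) := by
  have := hμ.1
  induction m with
  | zero =>
    have hm : MeasurableSet {ω : V → ℕ → Bool | 0 ∈ labels ω v} := by
      have : Measurable (fun ω : V → ℕ → Bool => ω v 0) := by fun_prop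
      exact this (MeasurableSet.of_discrete (s := {true}))
    have h := probReal_compl_eq_one_sub (μ := μ) hm
    rw [prob_zero hμ hp₀] at h
    have h2 : goodEv 0 0 v = {ω : V → ℕ → Bool | 0 ∈ labels ω v}ᶜ := by
      ext ω
      simp only [goodEv, Set.mem_ofPred_eq, Set.mem_compl_iff]
      constructor
      · exact fun h => h.1
      · exact fun h => ⟨h, fun j h1 h2 => by omega⟩
    rw [h2, h]
    linarith [hp₀.2]
  | succ m ih =>
    rw [goodEv_succ hμ hp v (Nat.zero_le _)]
    exact mul_pos (by linarith [hp.2]) ih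

lemma msg_hasM {G : SimpleGraph V} {l k : ℕ} (hk : k < l) (u v : V) (ω : V → ℕ → Bool) :
    msg G l u v ω ∈ hasM k ↔ DRel G (labels ω) k u v := by
  simp [hasM, mem_msg, hk]

lemma msg_noneM {G : SimpleGraph V} {l m : ℕ} (hm : m < l) (u v : V) (ω : V → ℕ → Bool) :
    msg G l u v ω ∈ noneM m ↔ ∀ k ≤ m, ¬ DRel G (labels ω) k u v := by
  simp only [noneM, Set.mem_ofPred_eq, mem_msg, not_and]
  exact forall₂_congr fun k hk => ⟨fun h => h (by omega), fun h _ => h⟩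

lemma prob_C [Fintype V] {G : SimpleGraph V} {g r : ℕ} (hreg : IsRegular G r)
    (hg : (g : ℕ∞) ≤ G.egirth) {μ : Measure (V → ℕ → Bool)} {p₀ p : ℝ}
    (hμ : IsLabelMeasure μ p₀ p) (n m : ℕ) (hnm : n ≤ m) (hm : m ≤ n + 1)
    (hl : 2 * (n + 2) < g) (u a c : V) (hac : G.Adj a c) :
    μ.real {ω | ∃ x, G.Adj u x ∧ ∃ k ≤ n, CProp G (labels ω) m u x k} =
      r * (∑ k ∈ Finset.range (n + 1), μ.real (goodEv k m a) *
        μ.real (msg G (n + 2) a c ⁻¹' hasM k)) * μ.real (msg G (n + 2) a c ⁻¹' noneM m) ^ (r - 1)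
        := by
  classical
  have := hμ.1
  have hcard : Fintype.card {w // G.Adj u w} = r := by
    rw [← Nat.card_eq_fintype_card]
    exact hreg u
  let Q : {w // G.Adj u w} → ℕ → {w // G.Adj u w} → Set (Finset ℕ) := fun x k w =>
    if w = x then hasM k else noneM m
  let Ev : {w // G.Adj u w} × ℕ → Set (V → ℕ → Bool) := fun q =>
    {ω | labTr (n + 2) u ω ∈ goodL q.2 m ∧
      ∀ w : {w // G.Adj u w}, msg G (n + 2) u w ω ∈ Q q.1 q.2 w}
  have hEv : ∀ q : {w // G.Adj u w} × ℕ, q.2 ≤ n → ∀ ω, ω ∈ Ev q ↔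
      CProp G (labels ω) m u q.1 q.2 := by
    rintro ⟨x, k⟩ hk ω
    simp only at hk
    have hgood : labTr (n + 2) u ω ∈ goodL k m ↔ ω ∈ goodEv k m u := by
      rw [← goodEv_eq (show m < n + 2 by omega)]
      rfl
    simp only [Ev, Set.mem_ofPred_eq, hgood, CProp]
    constructor
    · rintro ⟨h1, h2⟩
      refine ⟨?_, h1, fun v hv hvx => ?_⟩
      · have := h2 x
        simp only [Q, if_true] at this
        exact (msg_hasM (by omega) _ _ _).1 this
      · have := h2 ⟨v, hv⟩
        have hne : (⟨v, hv⟩ : {w // G.Adj u w}) ≠ x := fun h => hvx (congrArg Subtype.val h)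
        simp only [Q, if_neg hne] at this
        exact (msg_noneM (by omega) _ _ _).1 this
    · rintro ⟨h1, h2, h3⟩
      refine ⟨h2, fun w => ?_⟩
      by_cases hw : w = x
      · subst hw
        simp only [Q, if_true]
        exact (msg_hasM (by omega) _ _ _).2 h1
      · simp only [Q, if_neg hw]
        exact (msg_noneM (by omega) _ _ _).2 (h3 w w.2 (fun h => hw (Subtype.ext h)))
  have hunion : {ω | ∃ x, G.Adj u x ∧ ∃ k ≤ n, CProp G (labels ω) m u x k}
      = ⋃ q ∈ (Finset.univ ×ˢ Finset.range (n + 1) : Finset ({w // G.Adj u w} × ℕ)), Ev q := by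
    ext ω
    simp only [Set.mem_ofPred_eq, Set.mem_iUnion, Finset.mem_product, Finset.mem_univ, true_and,
      Finset.mem_range, exists_prop]
    constructor
    · rintro ⟨x, hx, k, hk, h⟩
      exact ⟨(⟨x, hx⟩, k), by simp; omega, (hEv (⟨x, hx⟩, k) hk ω).2 h⟩
    · rintro ⟨⟨x, k⟩, hk, h⟩
      simp only at hk
      exact ⟨x, x.2, k, by omega, (hEv (x, k) (by simp; omega) ω).1 h⟩
  have hmeas : ∀ q, MeasurableSet (Ev q) := by
    intro q
    have : Ev q = labTr (n + 2) u ⁻¹' goodL q.2 m ∩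
        ⋂ w : {w // G.Adj u w}, msg G (n + 2) u w ⁻¹' Q q.1 q.2 w := by
      ext ω
      simp [Ev]
    rw [this]
    exact (labTr_measurable _ _ .of_discrete).inter
      (MeasurableSet.iInter fun w => msg_measurable hg hl w.2 .of_discrete)
  rw [hunion, measureReal_biUnion_finset, Finset.sum_product]
  · have hprob : ∀ (x : {w // G.Adj u w}) (k : ℕ), μ.real (Ev (x, k)) =
        μ.real (goodEv k m a) * (μ.real (msg G (n + 2) a c ⁻¹' hasM k) *
          μ.real (msg G (n + 2) a c ⁻¹' noneM m) ^ (r - 1)) := by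
      intro x k
      have h1 := fam_prod hg hl (n + 2) u hμ (goodL k m) (Q x k)
      simp only [Ev]
      rw [h1, labTr_event hμ (n + 2) u a, goodEv_eq (by omega),
        ← Finset.mul_prod_erase Finset.univ _ (Finset.mem_univ x)]
      congr 2
      · simp only [Q, if_true]
        exact msg_event hreg hg hμ _ hl x.2 hac _
      · rw [Finset.prod_congr rfl (g := fun _ => μ.real (msg G (n + 2) a c ⁻¹' noneM m)),
          Finset.prod_const, Finset.card_erase_of_mem (Finset.mem_univ x), Finset.card_univ, hcard]
        intro w hw
        simp only [Q, if_neg (Finset.ne_of_mem_erase hw)]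
        exact msg_event hreg hg hμ _ hl w.2 hac _
    simp only [hprob]
    rw [Finset.sum_const, Finset.card_univ, hcard, nsmul_eq_mul, Finset.mul_sum, Finset.mul_sum,
      Finset.sum_mul]
    refine Finset.sum_congr rfl fun k _ => ?_
    ring
  · rintro ⟨x, k⟩ hq ⟨x', k'⟩ hq' hne
    rw [Function.onFun, Set.disjoint_left]
    intro ω h h'
    have hk : k ≤ n := by simp at hq; omega
    have hk' : k' ≤ n := by simp at hq'; omega
    obtain ⟨h1, h2, h3⟩ := (hEv (x, k) hk ω).1 h
    obtain ⟨h1', h2', h3'⟩ := (hEv (x', k') hk' ω).1 h'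
    simp only at h1 h1' h3'
    by_cases hx : x = x'
    · subst hx
      exact hne (by rw [dRel_unique h1 h1'])
    · exact h3' x x.2 (fun h => hx (Subtype.ext h)) k (by omega) h1
  · exact fun q _ => hmeas q

lemma prob_T [Fintype V] {G : SimpleGraph V} {g r : ℕ} (hreg : IsRegular G r)
    (hg : (g : ℕ∞) ≤ G.egirth) {μ : Measure (V → ℕ → Bool)} {p₀ p : ℝ}
    (hμ : IsLabelMeasure μ p₀ p) (n : ℕ)
    (hl : 2 * (n + 2) < g) (a c : V) (hac : G.Adj a c) :
    μ.real {ω | ∃ x, (G.Adj a x ∧ x ≠ c) ∧ ∃ k ≤ n, DRel G (labels ω) k a x ∧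
        (0 ∉ labels ω a ∧ ∀ j, k < j → j ≤ n → j ∉ labels ω a) ∧ DRel G (labels ω) (n + 1) a c ∧
        ∀ v, G.Adj a v → v ≠ x → v ≠ c → ∀ k' ≤ n, ¬ DRel G (labels ω) k' a v} =
      (r - 1 : ℕ) * (∑ k ∈ Finset.range (n + 1), μ.real (goodEv k n a) *
        μ.real (msg G (n + 2) a c ⁻¹' hasM k)) * μ.real (msg G (n + 2) a c ⁻¹' hasM (n + 1)) *
        μ.real (msg G (n + 2) a c ⁻¹' noneM n) ^ (r - 2) := by
  classical
  have := hμ.1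
  have hcard : Fintype.card {w // G.Adj a w} = r := by
    rw [← Nat.card_eq_fintype_card]
    exact hreg a
  let c' : {w // G.Adj a w} := ⟨c, hac⟩
  let Q : {w // G.Adj a w} → ℕ → {w // G.Adj a w} → Set (Finset ℕ) := fun x k w =>
    if w = x then hasM k else if w = c' then hasM (n + 1) else noneM n
  let Ev : {w // G.Adj a w} × ℕ → Set (V → ℕ → Bool) := fun q =>
    {ω | labTr (n + 2) a ω ∈ goodL q.2 n ∧
      ∀ w : {w // G.Adj a w}, msg G (n + 2) a w ω ∈ Q q.1 q.2 w}
  have hEv : ∀ q : {w // G.Adj a w} × ℕ, q.2 ≤ n → q.1 ≠ c' → ∀ ω, ω ∈ Ev q ↔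
      (DRel G (labels ω) q.2 a q.1 ∧
        (0 ∉ labels ω a ∧ ∀ j, q.2 < j → j ≤ n → j ∉ labels ω a) ∧
        DRel G (labels ω) (n + 1) a c ∧
        ∀ v, G.Adj a v → v ≠ q.1 → v ≠ c → ∀ k' ≤ n, ¬ DRel G (labels ω) k' a v) := by
    rintro ⟨x, k⟩ hk hxc ω
    simp only at hk hxc
    have hgood : labTr (n + 2) a ω ∈ goodL k n ↔ ω ∈ goodEv k n a := by
      rw [← goodEv_eq (show n < n + 2 by omega)]
      rfl
    simp only [Ev, Set.mem_ofPred_eq, hgood]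
    constructor
    · rintro ⟨h1, h2⟩
      refine ⟨?_, h1, ?_, fun v hv hvx hvc => ?_⟩
      · have := h2 x
        simp only [Q, if_true] at this
        exact (msg_hasM (by omega) _ _ _).1 this
      · have := h2 c'
        simp only [Q, if_neg hxc.symm, if_true] at this
        exact (msg_hasM (by omega) _ _ _).1 this
      · have := h2 ⟨v, hv⟩
        have hne : (⟨v, hv⟩ : {w // G.Adj a w}) ≠ x := fun h => hvx (congrArg Subtype.val h)
        have hne' : (⟨v, hv⟩ : {w // G.Adj a w}) ≠ c' := fun h => hvc (congrArg Subtype.val h)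
        simp only [Q, if_neg hne, if_neg hne'] at this
        exact (msg_noneM (by omega) _ _ _).1 this
    · rintro ⟨h1, h2, h3, h4⟩
      refine ⟨h2, fun w => ?_⟩
      by_cases hw : w = x
      · subst hw
        simp only [Q, if_true]
        exact (msg_hasM (by omega) _ _ _).2 h1
      · by_cases hw' : w = c'
        · subst hw'
          simp only [Q, if_neg hw, if_true]
          exact (msg_hasM (by omega) _ _ _).2 h3
        · simp only [Q, if_neg hw, if_neg hw']
          exact (msg_noneM (by omega) _ _ _).2 (h4 w w.2 (fun h => hw (Subtype.ext h))
            (fun h => hw' (Subtype.ext h)))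
  have hunion : {ω | ∃ x, (G.Adj a x ∧ x ≠ c) ∧ ∃ k ≤ n, DRel G (labels ω) k a x ∧
        (0 ∉ labels ω a ∧ ∀ j, k < j → j ≤ n → j ∉ labels ω a) ∧ DRel G (labels ω) (n + 1) a c ∧
        ∀ v, G.Adj a v → v ≠ x → v ≠ c → ∀ k' ≤ n, ¬ DRel G (labels ω) k' a v}
      = ⋃ q ∈ (Finset.univ.erase c' ×ˢ Finset.range (n + 1) : Finset ({w // G.Adj a w} × ℕ)),
        Ev q := by
    ext ω
    simp only [Set.mem_ofPred_eq, Set.mem_iUnion, Finset.mem_product, Finset.mem_univ, and_true,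
      Finset.mem_range, exists_prop, Finset.mem_erase]
    constructor
    · rintro ⟨x, ⟨hx, hxc⟩, k, hk, h⟩
      have hne : (⟨x, hx⟩ : {w // G.Adj a w}) ≠ c' := fun h => hxc (congrArg Subtype.val h)
      exact ⟨(⟨x, hx⟩, k), ⟨hne, by simp; omega⟩, (hEv (⟨x, hx⟩, k) hk hne ω).2 h⟩
    · rintro ⟨⟨x, k⟩, ⟨hne, hk⟩, h⟩
      simp only at hk hne
      exact ⟨x, ⟨x.2, fun h => hne (Subtype.ext h)⟩, k, by omega,
        (hEv (x, k) (by simp; omega) hne ω).1 h⟩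
  have hmeas : ∀ q, MeasurableSet (Ev q) := by
    intro q
    have : Ev q = labTr (n + 2) a ⁻¹' goodL q.2 n ∩
        ⋂ w : {w // G.Adj a w}, msg G (n + 2) a w ⁻¹' Q q.1 q.2 w := by
      ext ω
      simp [Ev]
    rw [this]
    exact (labTr_measurable _ _ .of_discrete).inter
      (MeasurableSet.iInter fun w => msg_measurable hg hl w.2 .of_discrete)
  rw [hunion, measureReal_biUnion_finset, Finset.sum_product]
  · have hprob : ∀ x ∈ Finset.univ.erase c', ∑ k ∈ Finset.range (n + 1), μ.real (Ev (x, k)) =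
        ∑ k ∈ Finset.range (n + 1),
        μ.real (goodEv k n a) * (μ.real (msg G (n + 2) a c ⁻¹' hasM k) *
          (μ.real (msg G (n + 2) a c ⁻¹' hasM (n + 1)) *
          μ.real (msg G (n + 2) a c ⁻¹' noneM n) ^ (r - 2))) := by
      intro x hx
      refine Finset.sum_congr rfl fun k _ => ?_
      have hxc : x ≠ c' := Finset.ne_of_mem_erase hx
      have hcx : c' ∈ Finset.univ.erase x := Finset.mem_erase.2 ⟨hxc.symm, Finset.mem_univ _⟩
      have h1 := fam_prod hg hl (n + 2) a hμ (goodL k n) (Q x k)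
      simp only [Ev]
      rw [h1, goodEv_eq (by omega),
        ← Finset.mul_prod_erase Finset.univ _ (Finset.mem_univ x),
        ← Finset.mul_prod_erase _ _ hcx]
      congr 2
      · simp only [Q, if_true]
        exact msg_event hreg hg hμ _ hl x.2 hac _
      · congr 1
        · simp only [Q, if_neg hxc.symm, if_true]
          rfl
        · rw [Finset.prod_congr rfl (g := fun _ => μ.real (msg G (n + 2) a c ⁻¹' noneM n)),
            Finset.prod_const, Finset.card_erase_of_mem hcx,
            Finset.card_erase_of_mem (Finset.mem_univ x), Finset.card_univ, hcard, Nat.sub_sub]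
          intro w hw
          have hw1 := Finset.ne_of_mem_erase hw
          have hw2 := Finset.ne_of_mem_erase (Finset.mem_of_mem_erase hw)
          simp only [Q, if_neg hw1, if_neg hw2]
          exact msg_event hreg hg hμ _ hl w.2 hac _
    rw [Finset.sum_congr rfl hprob]
    rw [Finset.sum_const, Finset.card_erase_of_mem (Finset.mem_univ _), Finset.card_univ, hcard,
      nsmul_eq_mul, mul_assoc, mul_assoc, Finset.sum_mul]
    congr 1
    refine Finset.sum_congr rfl fun k _ => ?_
    ring
  · rintro ⟨x, k⟩ hq ⟨x', k'⟩ hq' hne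
    rw [Function.onFun, Set.disjoint_left]
    intro ω h h'
    simp only [Finset.coe_product, Set.mem_prod, Finset.mem_coe, Finset.mem_erase,
      Finset.mem_range] at hq hq'
    have hk : k ≤ n := by omega
    have hk' : k' ≤ n := by omega
    obtain ⟨h1, h2, hc, h3⟩ := (hEv (x, k) hk hq.1.1 ω).1 h
    obtain ⟨h1', h2', hc', h3'⟩ := (hEv (x', k') hk' hq'.1.1 ω).1 h'
    simp only at h1 h1' h3'
    by_cases hx : x = x'
    · subst hx
      exact hne (by rw [dRel_unique h1 h1'])
    · exact h3' x x.2 (fun h => hx (Subtype.ext h)) (fun h => hq.1.1 (Subtype.ext h)) k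
        (by omega) h1
  · exact fun q _ => hmeas q

lemma blue_det [Fintype V] (G : SimpleGraph V) (n : ℕ) (v : V) :
    DetBy (Finset.univ ×ˢ Finset.range (n + 1)) (BEv G n v) := by
  intro ω ω' h
  refine blue_congr G n _ _ v fun z k hk => ?_
  have := h (z, k) (by simp; omega)
  simp only at this
  simp [labels, this]

lemma pair_label [Fintype V] (G : SimpleGraph V) {μ : Measure (V → ℕ → Bool)} {p₀ p : ℝ}
    (hμ : IsLabelMeasure μ p₀ p) (hp : p ∈ Ioo (0 : ℝ) 1) (n : ℕ) (a c : V) :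
    μ.real ((BEv G n a ∩ BEv G n c) ∩ {ω | (n + 1) ∈ labels ω c})
      = p * μ.real (BEv G n a ∩ BEv G n c) := by
  have hd1 : DetBy (Finset.univ ×ˢ Finset.range (n + 1)) (BEv G n a ∩ BEv G n c) :=
    fun ω ω' h => and_congr (blue_det G n a ω ω' h) (blue_det G n c ω ω' h)
  have hd2 : DetBy {(c, n + 1)} {ω : V → ℕ → Bool | (n + 1) ∈ labels ω c} := by
    intro ω ω' h
    have := h (c, n + 1) (by simp)
    simp only at this
    simp [labels, this]
  have h3 := DetBy.inter_indep hμ hd1 hd2 (by simp)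
  rw [measureReal_def, h3, ENNReal.toReal_mul, mul_comm, ← measureReal_def, ← measureReal_def,
    prob_true hμ hp]

lemma noneM_split [Fintype V] {G : SimpleGraph V} {g : ℕ}
    (hg : (g : ℕ∞) ≤ G.egirth) {μ : Measure (V → ℕ → Bool)} {p₀ p : ℝ}
    (hμ : IsLabelMeasure μ p₀ p) (n : ℕ)
    (hl : 2 * (n + 2) < g) (a c : V) (hac : G.Adj a c) :
    μ.real (msg G (n + 2) a c ⁻¹' noneM n) = μ.real (msg G (n + 2) a c ⁻¹' noneM (n + 1)) +
      μ.real (msg G (n + 2) a c ⁻¹' hasM (n + 1)) := by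
  have := hμ.1
  rw [← measureReal_union]
  · congr 1
    ext ω
    simp only [Set.mem_union, Set.mem_preimage]
    rw [msg_noneM (by omega), msg_noneM (by omega), msg_hasM (by omega)]
    constructor
    · intro h
      by_cases h' : DRel G (labels ω) (n + 1) a c
      · exact Or.inr h'
      · refine Or.inl fun k hk => ?_
        rcases Nat.lt_or_ge n k with h3 | h3
        · obtain rfl : k = n + 1 := by omega
          exact h'
        · exact h k h3
    · rintro (h | h) k hk hd
      · exact h k (by omega) hd
      · have := dRel_unique hd h
        omega
  · rw [Set.disjoint_left]
    intro ω h h'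
    rw [Set.mem_preimage, msg_noneM (by omega)] at h
    rw [Set.mem_preimage, msg_hasM (by omega)] at h'
    exact h _ le_rfl h'
  · exact msg_measurable hg hl hac .of_discrete

/-- `P(u ∈ B_i | u ∈ B_{i−1}) = (1−p)·(1 − r·p·t_{i−1}/((r−1)·b_{i−1}))^{r−1}`,
where `b_{i−1}` and `t_{i−1}` are computed from any vertex `a` and neighbour `c`. -/
theorem cond_prob_blue_given_blue
    [Fintype V] (r g : ℕ) (G : SimpleGraph V)
    (hreg : IsRegular G r) (hg : (g : ℕ∞) ≤ G.egirth)
    (p₀ p : ℝ) (hp₀ : p₀ ∈ Ioo (0 : ℝ) 1) (hp : p ∈ Ioo (0 : ℝ) 1)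
    (μ : Measure (V → ℕ → Bool)) (hμ : IsLabelMeasure μ p₀ p)
    (i : ℕ) (hi : 1 ≤ i) (hi1 : 2 * i < g - 3) (hi2 : 2 * (i + 2) < g - 2)
    (u a c : V) (hac : G.Adj a c) :
    (μ[|BEv G (i - 1) u] (BEv G i u)).toReal
      = (1 - p) * (1 - r * p * (μ (BEv G (i - 1) a ∩ BEv G (i - 1) c)).toReal
          / (((r : ℝ) - 1) * (μ (BEv G (i - 1) a)).toReal)) ^ (r - 1) := by
  obtain ⟨n, rfl⟩ : ∃ n, i = n + 1 := ⟨i - 1, by omega⟩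
  have := hμ.1
  simp only [Nat.add_sub_cancel]
  have hl : 2 * (n + 2) < g := by omega
  have hr : 1 ≤ r := by
    rw [← hreg a, Nat.one_le_iff_ne_zero, Ne, Set.ncard_eq_zero (Set.toFinite _)]
    exact Set.Nonempty.ne_empty ⟨c, hac⟩
  have hB : ∀ v, BEv G n v
      = {ω | ∃ x, G.Adj v x ∧ ∃ k ≤ n, CProp G (labels ω) n v x k} := by
    intro v
    ext ω
    exact blue_iff G (labels ω) n v
  have hBB : BEv G n u ∩ BEv G (n + 1) u
      = {ω | ∃ x, G.Adj u x ∧ ∃ k ≤ n, CProp G (labels ω) (n + 1) u x k} := by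
    ext ω
    exact blue_blue_iff G (labels ω) n u
  have hBu := prob_C hreg hg hμ n n le_rfl (by omega) hl u a c hac
  have hBa := prob_C hreg hg hμ n n le_rfl (by omega) hl a a c hac
  have hBB' := prob_C hreg hg hμ n (n + 1) (by omega) le_rfl hl u a c hac
  have hT := prob_T hreg hg hμ n hl a c hac
  have hTe : (BEv G n a ∩ BEv G n c) ∩ {ω | (n + 1) ∈ labels ω c}
      = {ω | ∃ x, (G.Adj a x ∧ x ≠ c) ∧ ∃ k ≤ n, DRel G (labels ω) k a x ∧
        (0 ∉ labels ω a ∧ ∀ j, k < j → j ≤ n → j ∉ labels ω a) ∧ DRel G (labels ω) (n + 1) a c ∧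
        ∀ v, G.Adj a v → v ≠ x → v ≠ c → ∀ k' ≤ n, ¬ DRel G (labels ω) k' a v} := by
    ext ω
    exact blue_pair_iff G (labels ω) n a c hac
  rw [← hTe, pair_label G hμ hp] at hT
  rw [← hB] at hBu hBa
  rw [← hBB] at hBB'
  have hsucc : ∑ k ∈ Finset.range (n + 1), μ.real (goodEv k (n + 1) a) *
        μ.real (msg G (n + 2) a c ⁻¹' hasM k)
      = (1 - p) * ∑ k ∈ Finset.range (n + 1), μ.real (goodEv k n a) *
        μ.real (msg G (n + 2) a c ⁻¹' hasM k) := by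
    rw [Finset.mul_sum]
    refine Finset.sum_congr rfl fun k hk => ?_
    rw [goodEv_succ hμ hp a (by simp at hk; omega), mul_assoc]
  rw [hsucc] at hBB'
  have hsplit := noneM_split hg hμ n hl a c hac
  have hα : 0 < ∑ k ∈ Finset.range (n + 1), μ.real (goodEv k n a) *
        μ.real (msg G (n + 2) a c ⁻¹' hasM k) := by
    refine Finset.sum_pos' (fun k _ => by positivity) ⟨0, by simp, ?_⟩
    refine mul_pos (goodEv_pos hμ hp₀ hp a n) ?_
    have h0 : msg G (n + 2) a c ⁻¹' hasM 0 = {ω | 0 ∈ labels ω c} := by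
      ext ω
      rw [Set.mem_preimage, msg_hasM (by omega), dRel_iff]
      simp
    rw [h0, prob_zero hμ hp₀]
    exact hp₀.1
  have hβ : 0 < μ.real (msg G (n + 2) a c ⁻¹' noneM n) := by
    refine (goodEv_pos hμ hp₀ hp c n).trans_le (measureReal_mono ?_)
    rintro ω ⟨h0, h⟩
    rw [Set.mem_preimage, msg_noneM (by omega)]
    intro k hk hd
    have hkS : k ∈ labels ω c := by
      rw [dRel_iff] at hd
      rcases hd with ⟨rfl, hd⟩ | ⟨hd, _⟩ <;> exact hd
    rcases Nat.eq_zero_or_pos k with rfl | hk0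
    · exact h0 hkS
    · exact h k hk0 hk hkS
  rw [cond_apply (blue_det G n u).measurableSet, ENNReal.toReal_mul, ENNReal.toReal_inv]
  simp only [← measureReal_def]
  rw [hBu, hBB', hBa]
  generalize (∑ k ∈ Finset.range (n + 1), μ.real (goodEv k n a) *
        μ.real (msg G (n + 2) a c ⁻¹' hasM k)) = α at *
  generalize μ.real (msg G (n + 2) a c ⁻¹' noneM n) = β at *
  generalize μ.real (msg G (n + 2) a c ⁻¹' noneM (n + 1)) = β' at *
  generalize μ.real (msg G (n + 2) a c ⁻¹' hasM (n + 1)) = ρ at *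
  generalize μ.real (BEv G n a ∩ BEv G n c) = t at *
  obtain rfl : β' = β - ρ := by linarith
  obtain ⟨s, rfl⟩ : ∃ s, r = s + 1 := ⟨r - 1, by omega⟩
  have hs0 : ((s : ℝ) + 1) ≠ 0 := by positivity
  simp only [Nat.add_sub_cancel, Nat.cast_add, Nat.cast_one, add_sub_cancel_right] at hT ⊢
  rcases Nat.eq_zero_or_pos s with rfl | hs
  · simp
    field_simp
  · obtain ⟨q, rfl⟩ : ∃ q, s = q + 1 := ⟨s - 1, by omega⟩
    have e1 : (q + 1 + 1 - 2 : ℕ) = q := by omega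
    rw [e1] at hT
    have hq0 : ((q + 1 : ℕ) : ℝ) ≠ 0 := by positivity
    have hfrac : (((q + 1 : ℕ) : ℝ) + 1) * p * t / (((q + 1 : ℕ) : ℝ) *
        ((((q + 1 : ℕ) : ℝ) + 1) * α * β ^ (q + 1))) = ρ / β := by
      rw [mul_assoc, hT, pow_succ]
      field_simp
    rw [hfrac]
    have h1 : 1 - ρ / β = (β - ρ) / β := by field_simp
    rw [h1, div_pow]
    field_simp

end InducedForest
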